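/- Tightness and checkers head normal forms: let h be a checkers head normal form. (1) Existence: there is a derivation Γ ⊢^k h : L whose typing (Γ, L) is tight. (2) Zero interaction: if Γ ⊢^k h : L with (Γ, L) tight, then k = 0. -/

import Mathlib

set_option autoImplicit false

/-! ### Players -/

inductive Player : Type
  | white
  | black
deriving DecidableEq

/-- The opposite player. -/
def Player.op : Player → Player
  | .white => .black
  | .black => .white

/-- `gamma p q` is `0` if the players agree (silent) and `1` otherwise (interaction). -/
def Player.gamma (p q : Player) : ℕ := if p = q then 0 else 1

/-! ### Ordinary λ-terms (de Bruijn representation) -/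

inductive Lam : Type
  | var : ℕ → Lam
  | lam : Lam → Lam
  | app : Lam → Lam → Lam
deriving DecidableEq

namespace Lam

/-- Shift the free de Bruijn indices ≥ `d` by one. -/
def liftAt : Lam → ℕ → Lam
  | .var n, d => .var (if n < d then n else n + 1)
  | .lam t, d => .lam (t.liftAt (d + 1))
  | .app t u, d => .app (t.liftAt d) (u.liftAt d)

/-- Capture-avoiding substitution of `u` for the de Bruijn index `x`. -/
def subst : Lam → ℕ → Lam → Lam
  | .var n, x, u => if n = x then u else if x < n then .var (n - 1) else .var n
  | .lam t, x, u => .lam (t.subst (x + 1) (u.liftAt 0))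
  | .app t s, x, u => .app (t.subst x u) (s.subst x u)

end Lam

/-- Root β-rule: `(λx.t) u ↦ t[x:=u]`. -/
inductive LBetaRoot : Lam → Lam → Prop
  | beta (t u : Lam) : LBetaRoot (.app (.lam t) u) (t.subst 0 u)

/-- Root η-rule: `λx. t x ↦ t` with `x ∉ FV(t)` (enforced by the lifting). -/
inductive LEtaRoot : Lam → Lam → Prop
  | eta (t : Lam) : LEtaRoot (.lam (.app (t.liftAt 0) (.var 0))) t

/-- Closure of a root relation under all contexts. -/
inductive LFull (R : Lam → Lam → Prop) : Lam → Lam → Prop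
  | root {t u : Lam} : R t u → LFull R t u
  | lam {t u : Lam} : LFull R t u → LFull R (.lam t) (.lam u)
  | appL {t t' : Lam} (u : Lam) : LFull R t t' → LFull R (.app t u) (.app t' u)
  | appR (t : Lam) {u u' : Lam} : LFull R u u' → LFull R (.app t u) (.app t u')

/-- Closure under applicative spine contexts `⟨·⟩ t1 … tk`. -/
inductive LSpine (R : Lam → Lam → Prop) : Lam → Lam → Prop
  | root {t u : Lam} : R t u → LSpine R t u
  | appL {t t' : Lam} (u : Lam) : LSpine R t t' → LSpine R (.app t u) (.app t' u)

/-- Closure under head contexts `λx1…xn.⟨·⟩ t1 … tk`. -/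
inductive LHead (R : Lam → Lam → Prop) : Lam → Lam → Prop
  | spine {t u : Lam} : LSpine R t u → LHead R t u
  | lam {t u : Lam} : LHead R t u → LHead R (.lam t) (.lam u)

/-- β-reduction. -/
def LBeta : Lam → Lam → Prop := LFull LBetaRoot
/-- η-reduction. -/
def LEta : Lam → Lam → Prop := LFull LEtaRoot
/-- Head reduction. -/
def LHStep : Lam → Lam → Prop := LHead LBetaRoot
/-- Multistep head reduction. -/
def LHSteps : Lam → Lam → Prop := Relation.ReflTransGen LHStep

/-- β-conversion (reflexive-symmetric-transitive closure of β-reduction). -/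
def LBetaConv : Lam → Lam → Prop :=
  Relation.ReflTransGen (fun a b => LBeta a b ∨ LBeta b a)
/-- η-conversion. -/
def LEtaConv : Lam → Lam → Prop :=
  Relation.ReflTransGen (fun a b => LEta a b ∨ LEta b a)

/-- Head normal forms: no head step out of `t`. -/
def Lam.LHNF (t : Lam) : Prop := ∀ u, ¬ LHStep t u

/-- Head convergence: `t ⇓h`. -/
def Lam.HConv (t : Lam) : Prop := ∃ h, LHSteps t h ∧ h.LHNF

/-- Ordinary contexts (one hole). -/
inductive LCtx : Type
  | hole : LCtx
  | lam : LCtx → LCtx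
  | appL : LCtx → Lam → LCtx
  | appR : Lam → LCtx → LCtx

/-- Plugging (allowing variable capture). -/
def LCtx.fill : LCtx → Lam → Lam
  | .hole, t => t
  | .lam C, t => .lam (C.fill t)
  | .appL C u, t => .app (C.fill t) u
  | .appR s C, t => .app s (C.fill t)

/-- Head contextual preorder on λ-terms. -/
def CtxLe (t u : Lam) : Prop := ∀ C : LCtx, (C.fill t).HConv → (C.fill u).HConv

/-! ### Checkers terms -/

inductive CTerm : Type
  | var : ℕ → CTerm
  | lam : Player → CTerm → CTerm
  | app : Player → CTerm → CTerm → CTerm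
deriving DecidableEq

namespace CTerm

/-- Shift the free de Bruijn indices ≥ `d` by one. -/
def liftAt : CTerm → ℕ → CTerm
  | .var n, d => .var (if n < d then n else n + 1)
  | .lam p t, d => .lam p (t.liftAt (d + 1))
  | .app p t u, d => .app p (t.liftAt d) (u.liftAt d)

/-- Capture-avoiding substitution of `u` for the de Bruijn index `x`. -/
def subst : CTerm → ℕ → CTerm → CTerm
  | .var n, x, u => if n = x then u else if x < n then .var (n - 1) else .var n
  | .lam p t, x, u => .lam p (t.subst (x + 1) (u.liftAt 0))
  | .app p t s, x, u => .app p (t.subst x u) (s.subst x u)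

/-- The underlying ordinary λ-term of a checkers term. -/
def untag : CTerm → Lam
  | .var n => .var n
  | .lam _ t => .lam t.untag
  | .app _ t u => .app t.untag u.untag

end CTerm

/-- Player lifting: tag every abstraction and application with player `p`. -/
def Lam.tag : Lam → Player → CTerm
  | .var n, _ => .var n
  | .lam t, p => .lam p (t.tag p)
  | .app t u, p => .app p (t.tag p) (u.tag p)

/-- Silent β root rule: the abstraction and the application carry the same player. -/
inductive SilentRoot : CTerm → CTerm → Prop
  | beta (p : Player) (t u : CTerm) : SilentRoot (.app p (.lam p t) u) (t.subst 0 u)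

/-- Interaction β root rule: the application carries the opposite player of the abstraction. -/
inductive InterRoot : CTerm → CTerm → Prop
  | beta (p : Player) (t u : CTerm) : InterRoot (.app p.op (.lam p t) u) (t.subst 0 u)

/-- Closure of a root relation under all checkers contexts. -/
inductive CFull (R : CTerm → CTerm → Prop) : CTerm → CTerm → Prop
  | root {t u : CTerm} : R t u → CFull R t u
  | lam (p : Player) {t u : CTerm} : CFull R t u → CFull R (.lam p t) (.lam p u)
  | appL (p : Player) {t t' : CTerm} (u : CTerm) : CFull R t t' → CFull R (.app p t u) (.app p t' u)
  | appR (p : Player) (t : CTerm) {u u' : CTerm} : CFull R u u' → CFull R (.app p t u) (.app p t u')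

/-- Closure under applicative spine contexts `⟨·⟩ @_{q1} t1 … @_{qk} tk`. -/
inductive CSpine (R : CTerm → CTerm → Prop) : CTerm → CTerm → Prop
  | root {t u : CTerm} : R t u → CSpine R t u
  | appL (p : Player) {t t' : CTerm} (u : CTerm) : CSpine R t t' → CSpine R (.app p t u) (.app p t' u)

/-- Closure under checkers head contexts `λ_{p1}x1…λ_{pn}xn.⟨·⟩ @_{q1} t1 … @_{qk} tk`. -/
inductive CHead (R : CTerm → CTerm → Prop) : CTerm → CTerm → Prop
  | spine {t u : CTerm} : CSpine R t u → CHead R t u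
  | lam (p : Player) {t u : CTerm} : CHead R t u → CHead R (.lam p t) (.lam p u)

/-- Silent β-reduction `→τ`. -/
def StepTau : CTerm → CTerm → Prop := CFull SilentRoot
/-- Interaction β-reduction `→⊛`. -/
def StepInt : CTerm → CTerm → Prop := CFull InterRoot
/-- Checkers β-reduction `→βch`. -/
def StepBch (t u : CTerm) : Prop := StepTau t u ∨ StepInt t u

/-- Silent head reduction `→hτ`. -/
def HStepTau : CTerm → CTerm → Prop := CHead SilentRoot
/-- Interaction head reduction `→h⊛`. -/
def HStepInt : CTerm → CTerm → Prop := CHead InterRoot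
/-- Checkers head reduction `→hch`. -/
def HStepCh (t u : CTerm) : Prop := HStepTau t u ∨ HStepInt t u

/-- Checkers head normal form. -/
def CTerm.HNF (t : CTerm) : Prop := ∀ u, ¬ HStepCh t u

/-- `BigStep t k` means `t ⇓^k`: the (deterministic) checkers head evaluation of `t`
terminates and performs exactly `k` interaction steps. -/
inductive BigStep : CTerm → ℕ → Prop
  | nf {t : CTerm} : t.HNF → BigStep t 0
  | silent {t u : CTerm} {k : ℕ} : HStepTau t u → BigStep u k → BigStep t k
  | inter {t u : CTerm} {k : ℕ} : HStepInt t u → BigStep u k → BigStep t (k + 1)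

/-- `HRed t n i u`: a checkers head reduction sequence from `t` to `u` of length `n`
containing exactly `i` interaction steps. -/
inductive HRed : CTerm → ℕ → ℕ → CTerm → Prop
  | refl (t : CTerm) : HRed t 0 0 t
  | silent {t u s : CTerm} {n i : ℕ} : HStepTau t u → HRed u n i s → HRed t (n + 1) i s
  | inter {t u s : CTerm} {n i : ℕ} : HStepInt t u → HRed u n i s → HRed t (n + 1) (i + 1) s

/-- Checkers contexts (one hole). -/
inductive CCtx : Type
  | hole : CCtx
  | lam : Player → CCtx → CCtx
  | appL : Player → CCtx → CTerm → CCtx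
  | appR : Player → CTerm → CCtx → CCtx

/-- Plugging (allowing variable capture). -/
def CCtx.fill : CCtx → CTerm → CTerm
  | .hole, t => t
  | .lam p C, t => .lam p (C.fill t)
  | .appL p C u, t => .app p (C.fill t) u
  | .appR p s C, t => .app p s (C.fill t)

/-- Player lifting of ordinary contexts. -/
def LCtx.tag : LCtx → Player → CCtx
  | .hole, _ => .hole
  | .lam C, p => .lam p (C.tag p)
  | .appL C u, p => .appL p (C.tag p) (u.tag p)
  | .appR s C, p => .appR p (s.tag p) (C.tag p)

/-- Checkers interaction preorder `≼ctx⊛` on checkers terms. -/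
def IntCtxLe (t u : CTerm) : Prop :=
  ∀ (C : CCtx) (k : ℕ), BigStep (C.fill t) k → BigStep (C.fill u) k

/-- Checkers interaction improvement `≼imp⊛` on checkers terms. -/
def ImpCtxLe (t u : CTerm) : Prop :=
  ∀ (C : CCtx) (k : ℕ), BigStep (C.fill t) k → ∃ k', k' ≤ k ∧ BigStep (C.fill u) k'

/-- Interaction preorder `⊑int` on ordinary λ-terms, via black lifting. -/
def IntLe (t u : Lam) : Prop := IntCtxLe (t.tag .black) (u.tag .black)

/-- Interaction improvement `⊑int·imp` on ordinary λ-terms, via black lifting. -/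
def ImpLe (t u : Lam) : Prop := ImpCtxLe (t.tag .black) (u.tag .black)

/-- Interaction equivalence `≡int`. -/
def IntEq (t u : Lam) : Prop := IntLe t u ∧ IntLe u t

/-- Silent conversion `=τ`: reflexive-symmetric-transitive closure of `→τ`. -/
def SilentConv : CTerm → CTerm → Prop :=
  Relation.ReflTransGen (fun a b => StepTau a b ∨ StepTau b a)


/-! ### Checkers multi types -/

/-- Linear types: an atom `X` and arrows `M →_{p,q} L`, where a multi type `M`
is a finite multiset of linear types (syntactically represented as a list). -/
inductive LType : Type
  | atom : LType
  | arrow : List LType → Player → Player → LType → LType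

/-- Type environments: a multi type for every de Bruijn index. -/
abbrev TEnv : Type := ℕ → Multiset LType

/-- The empty type environment. -/
def TEnv.zero : TEnv := fun _ => 0

/-- Pointwise multiset union of type environments. -/
def TEnv.add (Γ Δ : TEnv) : TEnv := fun n => Γ n + Δ n

/-- The environment assigning `[L]` to `x` and `0` elsewhere. -/
def TEnv.single (x : ℕ) (L : LType) : TEnv := fun n => if n = x then {L} else 0

/-- Extend an environment with a multi type for the freshly bound de Bruijn index `0`. -/
def TEnv.cons (M : Multiset LType) (Γ : TEnv) : TEnv := fun n =>
  match n with
  | 0 => M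
  | n + 1 => Γ n

mutual
  /-- Type derivations `π ▷ Γ ⊢^k t : L` of the checkers multi type system. -/
  inductive Deriv : TEnv → ℕ → CTerm → LType → Type
    | ax (x : ℕ) (L : LType) : Deriv (TEnv.single x L) 0 (.var x) L
    | lam {Γ : TEnv} {k : ℕ} {t : CTerm} {L : LType} (p q : Player) (M : List LType) :
        Deriv (TEnv.cons (Multiset.ofList M) Γ) k t L →
        Deriv Γ k (.lam p t) (.arrow M p q L)
    | app {Γ Δ : TEnv} {k₁ k₂ : ℕ} {t u : CTerm} {M : List LType} {p q : Player} {L : LType} :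
        Deriv Γ k₁ t (.arrow M p q L) → DerivM Δ k₂ u M →
        Deriv (TEnv.add Γ Δ) (k₁ + k₂ + Player.gamma p q) (.app q t u) L
  /-- Derivations `Γ ⊢^k t : M` of a multi type (the `many` rule). -/
  inductive DerivM : TEnv → ℕ → CTerm → List LType → Type
    | nil (t : CTerm) : DerivM TEnv.zero 0 t []
    | cons {Γ Δ : TEnv} {k k' : ℕ} {t : CTerm} {L : LType} {M : List LType} :
        Deriv Γ k t L → DerivM Δ k' t M → DerivM (TEnv.add Γ Δ) (k + k') t (L :: M)
end

mutual
  /-- The (applicative) size `|π|` of a derivation: its number of `@` rules. -/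
  def Deriv.size {Γ : TEnv} {k : ℕ} {t : CTerm} {L : LType} : Deriv Γ k t L → ℕ
    | .ax _ _ => 0
    | .lam _ _ _ π => Deriv.size π
    | .app π μ => Deriv.size π + DerivM.size μ + 1
  /-- Size of a multi-type derivation. -/
  def DerivM.size {Γ : TEnv} {k : ℕ} {t : CTerm} {M : List LType} : DerivM Γ k t M → ℕ
    | .nil _ => 0
    | .cons π μ => Deriv.size π + DerivM.size μ
end

/-- Typability `Γ ⊢^k t : L`. -/
def TJ (Γ : TEnv) (k : ℕ) (t : CTerm) (L : LType) : Prop := Nonempty (Deriv Γ k t L)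

/-- Checkers relational interpretation `⟦t⟧⊛ = {(Γ, k, L) | Γ ⊢^k t : L}`. -/
def CSem (t : CTerm) : Set (TEnv × ℕ × LType) := {x | TJ x.1 x.2.1 t x.2.2}

/-- Black type preorder `⊑•type` on ordinary λ-terms. -/
def BTypeLe (t u : Lam) : Prop := CSem (t.tag .black) ⊆ CSem (u.tag .black)

/-! ### Tight typings -/

/-- All arrows occurring in a linear type are silent (`p = q`). -/
inductive AllSilent : LType → Prop
  | atom : AllSilent .atom
  | arrow {M : List LType} {p : Player} {L : LType} :
      (∀ L' ∈ M, AllSilent L') → AllSilent L → AllSilent (.arrow M p p L)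

/-- The number of nonempty multi types occurring in a linear type. -/
def LType.neCount : LType → ℕ
  | .atom => 0
  | .arrow M _ _ L =>
      min M.length 1 + (M.attach.map fun x => LType.neCount x.1).sum + LType.neCount L
decreasing_by
  · have := List.sizeOf_lt_of_mem x.2
    simp only [LType.arrow.sizeOf_spec]
    omega
  · simp only [LType.arrow.sizeOf_spec]
    omega

/-- The number of nonempty multi types occurring in a multi type (counting itself). -/
def mNeCount (m : Multiset LType) : ℕ :=
  min (Multiset.card m) 1 + (m.map LType.neCount).sum

/-- A typing `(Γ, L)` is tight when all the multi types occurring in `Γ` and `L`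
are empty except for exactly one, and all arrows occurring in `(Γ, L)` are silent. -/
def Tight (Γ : TEnv) (L : LType) : Prop :=
  AllSilent L ∧ (∀ n : ℕ, ∀ L' ∈ Γ n, AllSilent L') ∧
    ∃ S : Finset ℕ, (∀ n : ℕ, n ∉ S → Γ n = 0) ∧
      (∑ n ∈ S, mNeCount (Γ n)) + LType.neCount L = 1


inductive Neutral : CTerm → Prop
  | var (n : ℕ) : Neutral (.var n)
  | app (q : Player) {t : CTerm} (u : CTerm) : Neutral t → Neutral (.app q t u)

theorem neutral_of_noSpine (t : CTerm) (q : Player) (u : CTerm)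
    (h1 : ∀ s, ¬ CSpine SilentRoot (.app q t u) s)
    (h2 : ∀ s, ¬ CSpine InterRoot (.app q t u) s) : Neutral (.app q t u) := by
  induction t generalizing q u with
  | var n => exact .app _ _ (.var n)
  | lam p t _ =>
    exfalso
    cases p <;> cases q
    · exact h1 _ (.root (.beta _ _ _))
    · exact h2 _ (.root (.beta .white _ _))
    · exact h2 _ (.root (.beta .black _ _))
    · exact h1 _ (.root (.beta _ _ _))
  | app p t s iht _ =>
    exact .app _ _ (iht p s (fun r hr => h1 _ (.appL _ _ hr)) (fun r hr => h2 _ (.appL _ _ hr)))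

theorem neCount_arrow (M : List LType) (p q : Player) (L : LType) :
    (LType.arrow M p q L).neCount = mNeCount (Multiset.ofList M) + L.neCount := by
  rw [LType.neCount, mNeCount]
  simp

theorem neutral_deriv {t : CTerm} (ht : Neutral t) :
    ∀ (Γ : TEnv) (k : ℕ) (L : LType), Deriv Γ k t L →
      ∃ y, ∃ T ∈ Γ y, AllSilent T → T.neCount = 0 → k = 0 ∧ AllSilent L ∧ L.neCount = 0 := by
  induction ht with
  | var n =>
    intro Γ k L d
    cases d
    exact ⟨n, L, by simp [TEnv.single], fun a b => ⟨rfl, a, b⟩⟩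
  | app q u _ ih =>
    intro Γ k L d
    cases d with
    | app d m =>
      obtain ⟨y, T, hT, h⟩ := ih _ _ _ d
      refine ⟨y, T, by simp [TEnv.add, hT], fun a b => ?_⟩
      obtain ⟨rfl, hs, hc⟩ := h a b
      rw [neCount_arrow] at hc
      cases hs with
      | arrow hM hL =>
        cases m with
        | nil => exact ⟨by simp [Player.gamma], hL, by omega⟩
        | cons _ _ => simp [mNeCount] at hc

theorem neutral_exists {t : CTerm} (ht : Neutral t) :
    ∀ L : LType, AllSilent L → L.neCount = 0 →
      ∃ y T, AllSilent T ∧ T.neCount = 0 ∧ Nonempty (Deriv (TEnv.single y T) 0 t L) := by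
  induction ht with
  | var n => exact fun L a b => ⟨n, L, a, b, ⟨.ax _ _⟩⟩
  | app q u _ ih =>
    intro L a b
    obtain ⟨y, T, h1, h2, ⟨d⟩⟩ := ih (.arrow [] q q L) (.arrow (by simp) a)
      (by rw [neCount_arrow]; simp [mNeCount, b])
    refine ⟨y, T, h1, h2, ⟨?_⟩⟩
    have d' := Deriv.app d (.nil u)
    have e : TEnv.add (TEnv.single y T) TEnv.zero = TEnv.single y T := by
      funext n; simp [TEnv.add, TEnv.zero]
    rw [e] at d'
    simpa [Player.gamma] using d'

theorem tight_iff (Γ : TEnv) (L : LType) : Tight Γ L ↔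
    AllSilent L ∧ (∀ n : ℕ, ∀ L' ∈ Γ n, AllSilent L') ∧
      ∃ N : ℕ, (∀ n, N ≤ n → Γ n = 0) ∧
        (∑ n ∈ Finset.range N, mNeCount (Γ n)) + L.neCount = 1 := by
  constructor
  · rintro ⟨h1, h2, S, h3, h4⟩
    refine ⟨h1, h2, S.sup id + 1, fun n hn => h3 n fun hS => ?_, ?_⟩
    · have := Finset.le_sup (f := id) hS
      simp only [id] at this
      omega
    · rw [← h4]
      congr 1
      symm
      apply Finset.sum_subset
      · intro n hS
        have := Finset.le_sup (f := id) hS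
        simp only [id] at this
        rw [Finset.mem_range]
        omega
      · intro n _ hn
        simp [h3 n hn, mNeCount]
  · rintro ⟨h1, h2, N, h3, h4⟩
    exact ⟨h1, h2, Finset.range N, fun n hn => h3 n (by simpa using hn), h4⟩

theorem tight_lam (Γ : TEnv) (M : List LType) (p q : Player) (L : LType) :
    Tight Γ (.arrow M p q L) ↔ p = q ∧ Tight (TEnv.cons (Multiset.ofList M) Γ) L := by
  rw [tight_iff, tight_iff, neCount_arrow]
  constructor
  · rintro ⟨h1, h2, N, h3, h4⟩
    cases h1 with
    | arrow hM hL =>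
      refine ⟨rfl, hL, ?_, N + 1, ?_, ?_⟩
      · rintro (_ | n) L' h
        · exact hM L' (by simpa [TEnv.cons] using h)
        · exact h2 n L' h
      · rintro (_ | n) h
        · omega
        · exact h3 n (by omega)
      · rw [Finset.sum_range_succ']
        simp only [TEnv.cons]
        omega
  · rintro ⟨rfl, h1, h2, N, h3, h4⟩
    refine ⟨.arrow (fun L' h => h2 0 L' (by simpa [TEnv.cons] using h)) h1,
      fun n => h2 (n + 1), N, fun n hn => h3 (n + 1) (by omega), ?_⟩
    have e : ∑ n ∈ Finset.range (N + 1), mNeCount (TEnv.cons (Multiset.ofList M) Γ n)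
        = ∑ n ∈ Finset.range N, mNeCount (TEnv.cons (Multiset.ofList M) Γ n) := by
      rw [Finset.sum_range_succ, h3 N le_rfl]; simp [mNeCount]
    rw [← e, Finset.sum_range_succ'] at h4
    simp only [TEnv.cons] at h4
    omega

theorem neutral_main {h : CTerm} (hn : Neutral h) :
    (∃ (Γ : TEnv) (k : ℕ) (L : LType), Nonempty (Deriv Γ k h L) ∧ Tight Γ L) ∧
    (∀ (Γ : TEnv) (k : ℕ) (L : LType), Nonempty (Deriv Γ k h L) → Tight Γ L → k = 0) := by
  constructor
  · obtain ⟨y, T, h1, h2, d⟩ := neutral_exists hn .atom .atom (by rw [LType.neCount])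
    refine ⟨_, _, _, d, .atom, ?_, {y}, ?_, ?_⟩
    · intro n L' h
      by_cases e : n = y
      · simp [TEnv.single, e] at h
        exact h ▸ h1
      · simp [TEnv.single, e] at h
    · intro n h
      have : n ≠ y := by simpa using h
      simp [TEnv.single, this]
    · simp [TEnv.single, mNeCount, h2, LType.neCount]
  · rintro Γ k L ⟨d⟩ ⟨h1, h2, S, h3, h4⟩
    obtain ⟨y, T, hT, h⟩ := neutral_deriv hn _ _ _ d
    refine (h (h2 y T hT) ?_).1
    have hy : y ∈ S := by
      by_contra hy
      simp [h3 y hy] at hT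
    have h5 := Finset.single_le_sum (f := fun n => mNeCount (Γ n)) (fun _ _ => Nat.zero_le _) hy
    obtain ⟨m, hm⟩ := Multiset.exists_cons_of_mem hT
    simp [hm, mNeCount] at h5
    simp only [mNeCount] at h4
    omega

/-- Tightness and checkers head normal forms: existence of tight derivations, and
zero interaction index of tight derivations. -/
theorem tightness_and_head_normal_forms (h : CTerm) (hh : h.HNF) :
    (∃ (Γ : TEnv) (k : ℕ) (L : LType), Nonempty (Deriv Γ k h L) ∧ Tight Γ L) ∧
    (∀ (Γ : TEnv) (k : ℕ) (L : LType), Nonempty (Deriv Γ k h L) → Tight Γ L → k = 0) := by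
  induction h with
  | var n => exact neutral_main (.var n)
  | app q t u _ _ =>
    exact neutral_main (neutral_of_noSpine t q u (fun s hs => hh s (.inl (.spine hs)))
      (fun s hs => hh s (.inr (.spine hs))))
  | lam p t ih =>
    obtain ⟨⟨Γ, k, L, ⟨d⟩, hT⟩, h2⟩ := ih (fun u hu => hh (.lam p u)
      (hu.elim (fun a => .inl (.lam p a)) (fun a => .inr (.lam p a))))
    constructor
    · have e : TEnv.cons (Multiset.ofList (Γ 0).toList) (fun n => Γ (n + 1)) = Γ := by
        funext n
        cases n <;> simp [TEnv.cons]
      rw [← e] at d hT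
      exact ⟨_, k, .arrow (Γ 0).toList p p L, ⟨.lam p p _ d⟩, (tight_lam _ _ _ _ _).2 ⟨rfl, hT⟩⟩
    · rintro Γ' k' L' ⟨d'⟩ hT'
      cases d' with
      | lam _ q M d' => exact h2 _ _ _ ⟨d'⟩ ((tight_lam _ _ _ _ _).1 hT').2
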